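/- There exist ε > 0 and C > 0 such that for every Δt ∈ (0, ε), the quantities A(Δt) := (1−ρΔt)(1−φ(Δt))²γΔt / (1 − (1−ρΔt)(1−φ(Δt))²) and B(Δt) := (1−ρΔt)β(Δt)(2(1−λ(Δt)β(Δt)) − β(Δt)(A(Δt) + γΔt)) are well defined (the denominator in A is nonzero) and satisfy |A(Δt) − (√2/4)·γ^{1/2}(σ_S/σ_K)^{1/2}·√Δt| ≤ C·Δt and |B(Δt) − (σ_K/σ_S − (√2/4)·γ^{1/2}(σ_K/σ_S)^{3/2}·√Δt)| ≤ C·Δt. -/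

import Mathlib

/-!
In the scale-free unknown `x = β / (σ_K/σ_S)`, with `δ = ρΔt` and `k = (σ_K/σ_S)γΔt`, the quartic
reads `(1 - x²)(1 - (1 - δ)x²) = k x(1 + x²)`, while `1 - λβ = 1/(1 + x²)` and `1 - φ = x²`.
Comparing the two sides near `x = 1` gives `(1 - x²)² ≈ 2k`, and in fact `1 - x² = √(2k) + O(k)`
when `δ = O(k)`. Hence the denominator `1 - (1 - δ)x⁴` of `A` is `2√(2k) + O(k)`, so
`(σ_K/σ_S) A = k / (2√(2k)) + O(k) = √(2k)/4 + O(k)`. In `B` the factor `2x/(1 + x²)` differs from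
`1` only to second order in `1 - x²`, so `B / (σ_K/σ_S) = 1 - (σ_K/σ_S) A + O(k)`.
-/

open Filter Asymptotics Set
open scoped Topology

/-- The scale-free form of the monopoly quartic together with the range of its unknown: `x` stands
for `β / (σ_K/σ_S)`, `δ` for `ρΔt` and `k` for `(σ_K/σ_S)γΔt`. -/
structure IsNormalizedRoot (δ k x : ℝ) : Prop where
  pos : 0 < x
  le_one : x ≤ 1
  eq : (1 - x ^ 2) * (1 - (1 - δ) * x ^ 2) = k * (x * (1 + x ^ 2))

/-- The value-function coefficient `A` in scale-free form: `(σ_K/σ_S) A` as a function of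
`δ = ρΔt`, `k = (σ_K/σ_S)γΔt` and `x = β / (σ_K/σ_S)`. -/
noncomputable def normalizedA (δ k x : ℝ) : ℝ :=
  (1 - δ) * x ^ 4 * k / (1 - (1 - δ) * x ^ 4)

/-- The value-function coefficient `B` in scale-free form: `B / (σ_K/σ_S)` as a function of
`δ = ρΔt`, `k = (σ_K/σ_S)γΔt` and `x = β / (σ_K/σ_S)`. -/
noncomputable def normalizedB (δ k x : ℝ) : ℝ :=
  (1 - δ) * x * (2 / (1 + x ^ 2) - x * (normalizedA δ k x + k))

theorem exists_isNormalizedRoot (δ : ℝ) {k : ℝ} (hk : 0 ≤ k) : ∃ x, IsNormalizedRoot δ k x := by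
  let f : ℝ → ℝ := fun x ↦ k * (x * (1 + x ^ 2)) - (1 - x ^ 2) * (1 - (1 - δ) * x ^ 2)
  have hf : ContinuousOn f (Icc 0 1) := by fun_prop
  have hzero : (0 : ℝ) ∈ Ioc (f 0) (f 1) := ⟨by norm_num [f], by norm_num [f, hk]⟩
  obtain ⟨x, ⟨hx0, hx1⟩, hfx⟩ := intermediate_value_Ioc zero_le_one hf hzero
  exact ⟨x, hx0, hx1, (sub_eq_zero.mp hfx).symm⟩

namespace IsNormalizedRoot

variable {δ k x y : ℝ}

theorem sq_le_one (hx : IsNormalizedRoot δ k x) : x ^ 2 ≤ 1 :=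
  pow_le_one₀ hx.pos.le hx.le_one

theorem one_sub_le_one_sub_sq (hx : IsNormalizedRoot δ k x) : 1 - x ≤ 1 - x ^ 2 := by
  nlinarith [mul_nonneg hx.pos.le (sub_nonneg.mpr hx.le_one)]

theorem le (hδ : δ ≤ 1) (hk : 0 < k) (hx : IsNormalizedRoot δ k x)
    (hy : IsNormalizedRoot δ k y) : y ≤ x := by
  -- As long as both left-hand factors are nonnegative, the left-hand side of the equation
  -- decreases in `x` and the right-hand side increases; at a root they are.
  by_contra! hxy
  have hsq : x ^ 2 < y ^ 2 := pow_lt_pow_left₀ hxy hx.pos.le two_ne_zero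
  have hy_pos : 0 < (1 - y ^ 2) * (1 - (1 - δ) * y ^ 2) := by
    rw [hy.eq]
    have := hy.pos
    positivity
  have hfactor : 0 < 1 - (1 - δ) * y ^ 2 :=
    pos_of_mul_pos_right hy_pos (sub_nonneg.mpr hy.sq_le_one)
  have hfactor_le : 1 - (1 - δ) * y ^ 2 ≤ 1 - (1 - δ) * x ^ 2 := by
    have := mul_le_mul_of_nonneg_left hsq.le (sub_nonneg.mpr hδ)
    linarith
  have hlhs : (1 - y ^ 2) * (1 - (1 - δ) * y ^ 2) ≤ (1 - x ^ 2) * (1 - (1 - δ) * x ^ 2) :=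
    mul_le_mul (by linarith) hfactor_le hfactor.le (sub_nonneg.mpr hx.sq_le_one)
  have hrhs : k * (x * (1 + x ^ 2)) < k * (y * (1 + y ^ 2)) := by
    have := hx.pos
    gcongr
  rw [hx.eq, hy.eq] at hlhs
  exact hlhs.not_gt hrhs

theorem unique (hδ : δ ≤ 1) (hk : 0 < k) (hx : IsNormalizedRoot δ k x)
    (hy : IsNormalizedRoot δ k y) : x = y :=
  le_antisymm (hy.le hδ hk hx) (hx.le hδ hk hy)

theorem abs_sq_one_sub_sq_sub_le (hk : 0 ≤ k) (hx : IsNormalizedRoot δ k x) :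
    |(1 - x ^ 2) ^ 2 - 2 * k| ≤ (4 * k + |δ|) * (1 - x ^ 2) := by
  have hu : 0 ≤ 1 - x ^ 2 := sub_nonneg.mpr hx.sq_le_one
  have hsplit : (1 - x ^ 2) ^ 2 - 2 * k =
      -(k * ((1 - x) * (x ^ 2 + x + 2))) - δ * (x ^ 2 * (1 - x ^ 2)) := by
    linear_combination hx.eq
  have hdefect : (1 - x) * (x ^ 2 + x + 2) ≤ (1 - x ^ 2) * 4 :=
    mul_le_mul hx.one_sub_le_one_sub_sq (by linarith [hx.sq_le_one, hx.le_one])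
      (by have := hx.pos; positivity) hu
  have hdefect_nonneg : 0 ≤ (1 - x) * (x ^ 2 + x + 2) :=
    mul_nonneg (sub_nonneg.mpr hx.le_one) (by have := hx.pos; positivity)
  calc |(1 - x ^ 2) ^ 2 - 2 * k|
      ≤ |k * ((1 - x) * (x ^ 2 + x + 2))| + |δ * (x ^ 2 * (1 - x ^ 2))| := by
        rw [hsplit, ← abs_neg (k * _)]
        exact abs_sub _ _
    _ = k * ((1 - x) * (x ^ 2 + x + 2)) + |δ| * (x ^ 2 * (1 - x ^ 2)) := by
        rw [abs_of_nonneg (mul_nonneg hk hdefect_nonneg), abs_mul,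
          abs_of_nonneg (mul_nonneg (sq_nonneg x) hu)]
    _ ≤ k * ((1 - x ^ 2) * 4) + |δ| * (1 * (1 - x ^ 2)) := by
        gcongr
        exact hx.sq_le_one
    _ = (4 * k + |δ|) * (1 - x ^ 2) := by ring

theorem abs_one_sub_sq_sub_sqrt_le (hk : 0 < k) (hx : IsNormalizedRoot δ k x) :
    |1 - x ^ 2 - √(2 * k)| ≤ 4 * k + |δ| := by
  have hu : 0 ≤ 1 - x ^ 2 := sub_nonneg.mpr hx.sq_le_one
  have hw : 0 < √(2 * k) := by positivity
  refine le_of_mul_le_mul_right ?_ (add_pos_of_nonneg_of_pos hu hw)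
  calc |1 - x ^ 2 - √(2 * k)| * (1 - x ^ 2 + √(2 * k))
      = |(1 - x ^ 2) ^ 2 - 2 * k| := by
        rw [← Real.sq_sqrt (show 0 ≤ 2 * k by positivity), sq_sub_sq, abs_mul,
          abs_of_nonneg (add_nonneg hu hw.le), mul_comm, Real.sq_sqrt (by positivity)]
    _ ≤ (4 * k + |δ|) * (1 - x ^ 2) := hx.abs_sq_one_sub_sq_sub_le hk.le
    _ ≤ (4 * k + |δ|) * (1 - x ^ 2 + √(2 * k)) := by
        gcongr
        linarith

theorem abs_two_mul_div_sub_one_le (hx : IsNormalizedRoot δ k x) :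
    |2 * x / (1 + x ^ 2) - 1| ≤ (1 - x ^ 2) ^ 2 := by
  have heq : 2 * x / (1 + x ^ 2) - 1 = -((1 - x) ^ 2 / (1 + x ^ 2)) := by
    field_simp
    ring
  calc |2 * x / (1 + x ^ 2) - 1| = (1 - x) ^ 2 / (1 + x ^ 2) := by
        rw [heq, abs_neg, abs_of_nonneg (by positivity)]
    _ ≤ (1 - x) ^ 2 := div_le_self (sq_nonneg _) (by nlinarith)
    _ ≤ (1 - x ^ 2) ^ 2 :=
        pow_le_pow_left₀ (sub_nonneg.mpr hx.le_one) hx.one_sub_le_one_sub_sq 2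

end IsNormalizedRoot

section Asymptotic

variable {ι : Type*} {l : Filter ι} {δ k x : ι → ℝ}

theorem mul_isBigO_of_isBigO_sqrt {f g : ι → ℝ} (hk : ∀ᶠ i in l, 0 ≤ k i)
    (hf : f =O[l] fun i ↦ √(2 * k i)) (hg : g =O[l] fun i ↦ √(2 * k i)) :
    (fun i ↦ f i * g i) =O[l] k := by
  have hsq : (fun i ↦ √(2 * k i) * √(2 * k i)) =ᶠ[l] fun i ↦ 2 * k i := by
    filter_upwards [hk] with i hi
    exact Real.mul_self_sqrt (by positivity)
  exact (hf.mul hg).trans (hsq.trans_isBigO ((isBigO_refl k l).const_mul_left 2))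

theorem isLittleO_sqrt (hk : Tendsto k l (𝓝[≥] 0)) : k =o[l] fun i ↦ √(2 * k i) := by
  obtain ⟨hk0, hk_nonneg⟩ := tendsto_nhdsWithin_iff.mp hk
  have hsqrt : (fun i ↦ √(2 * k i)) =o[l] fun _ ↦ (1 : ℝ) := by
    rw [isLittleO_one_iff]
    simpa using (hk0.const_mul 2).sqrt
  have hsq : k =ᶠ[l] fun i ↦ 2⁻¹ * (√(2 * k i) * √(2 * k i)) := by
    filter_upwards [hk_nonneg] with i hi
    have : 0 ≤ k i := hi
    rw [Real.mul_self_sqrt (by positivity), inv_mul_cancel_left₀ two_ne_zero]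
  simpa using hsq.trans_isLittleO ((hsqrt.mul_isBigO (isBigO_refl _ l)).const_mul_left 2⁻¹)

theorem isBigO_one_of_isNormalizedRoot (hx : ∀ᶠ i in l, IsNormalizedRoot (δ i) (k i) (x i)) :
    x =O[l] fun _ ↦ (1 : ℝ) := by
  refine IsBigO.of_bound' ?_
  filter_upwards [hx] with i hi
  simpa only [Real.norm_of_nonneg hi.pos.le, norm_one] using hi.le_one

theorem one_sub_sq_sub_sqrt_isBigO (hk : ∀ᶠ i in l, 0 < k i) (hδ : δ =O[l] k)
    (hx : ∀ᶠ i in l, IsNormalizedRoot (δ i) (k i) (x i)) :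
    (fun i ↦ 1 - x i ^ 2 - √(2 * k i)) =O[l] k := by
  have hbound : (fun i ↦ 1 - x i ^ 2 - √(2 * k i)) =O[l] fun i ↦ 4 * k i + |δ i| := by
    refine IsBigO.of_bound' ?_
    filter_upwards [hk, hx] with i hki hi
    exact (hi.abs_one_sub_sq_sub_sqrt_le hki).trans (le_abs_self _)
  exact hbound.trans (((isBigO_refl k l).const_mul_left 4).add hδ.abs_left)

theorem one_sub_sq_isBigO_sqrt (hk : Tendsto k l (𝓝[>] 0)) (hδ : δ =O[l] k)
    (hx : ∀ᶠ i in l, IsNormalizedRoot (δ i) (k i) (x i)) :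
    (fun i ↦ 1 - x i ^ 2) =O[l] fun i ↦ √(2 * k i) := by
  obtain ⟨-, hk_pos⟩ := tendsto_nhdsWithin_iff.mp hk
  have hk_sqrt := isLittleO_sqrt (hk.mono_right (nhdsWithin_mono 0 Ioi_subset_Ici_self))
  have hsmall := (one_sub_sq_sub_sqrt_isBigO hk_pos hδ hx).trans hk_sqrt.isBigO
  simpa only [sub_add_cancel] using hsmall.add (isBigO_refl _ l)

theorem normalizedA_denominator_sub_sqrt_isBigO (hk : Tendsto k l (𝓝[>] 0)) (hδ : δ =O[l] k)
    (hx : ∀ᶠ i in l, IsNormalizedRoot (δ i) (k i) (x i)) :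
    (fun i ↦ 1 - (1 - δ i) * x i ^ 4 - 2 * √(2 * k i)) =O[l] k := by
  obtain ⟨-, hk_pos⟩ := tendsto_nhdsWithin_iff.mp hk
  have hu := one_sub_sq_isBigO_sqrt hk hδ hx
  have hmain := (one_sub_sq_sub_sqrt_isBigO hk_pos hδ hx).const_mul_left 2
  have hquad := mul_isBigO_of_isBigO_sqrt (hk_pos.mono fun _ hi ↦ le_of_lt hi) hu hu
  have hdiscount : (fun i ↦ δ i * x i ^ 4) =O[l] k := by
    simpa only [one_pow, mul_one] using hδ.mul ((isBigO_one_of_isNormalizedRoot hx).pow 4)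
  refine ((hmain.sub hquad).add hdiscount).congr_left fun i ↦ ?_
  ring

theorem normalizedA_denominator_isEquivalent (hk : Tendsto k l (𝓝[>] 0)) (hδ : δ =O[l] k)
    (hx : ∀ᶠ i in l, IsNormalizedRoot (δ i) (k i) (x i)) :
    (fun i ↦ 1 - (1 - δ i) * x i ^ 4) ~[l] fun i ↦ 2 * √(2 * k i) := by
  have hk_sqrt := isLittleO_sqrt (hk.mono_right (nhdsWithin_mono 0 Ioi_subset_Ici_self))
  exact (normalizedA_denominator_sub_sqrt_isBigO hk hδ hx).trans_isLittleO
    (hk_sqrt.const_mul_right two_ne_zero)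

theorem eventually_normalizedA_denominator_ne_zero (hk : Tendsto k l (𝓝[>] 0)) (hδ : δ =O[l] k)
    (hx : ∀ᶠ i in l, IsNormalizedRoot (δ i) (k i) (x i)) :
    ∀ᶠ i in l, 1 - (1 - δ i) * x i ^ 4 ≠ 0 := by
  obtain ⟨-, hk_pos⟩ := tendsto_nhdsWithin_iff.mp hk
  have hequiv := normalizedA_denominator_isEquivalent hk hδ hx
  filter_upwards [hk_pos, hequiv.isBigO_symm.eq_zero_imp] with i hi hzero hD
  have : 0 < k i := hi
  have : 0 < 2 * √(2 * k i) := by positivity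
  exact this.ne' (hzero hD)

theorem normalizedA_sub_isBigO (hk : Tendsto k l (𝓝[>] 0)) (hδ : δ =O[l] k)
    (hx : ∀ᶠ i in l, IsNormalizedRoot (δ i) (k i) (x i)) :
    (fun i ↦ normalizedA (δ i) (k i) (x i) - √(2 * k i) / 4) =O[l] k := by
  obtain ⟨-, hk_pos⟩ := tendsto_nhdsWithin_iff.mp hk
  have hD_lower := (normalizedA_denominator_isEquivalent hk hδ hx).isBigO_symm
  have hD_sub := normalizedA_denominator_sub_sqrt_isBigO hk hδ hx
  have hratio : (fun i ↦ 2 * √(2 * k i) / (1 - (1 - δ i) * x i ^ 4)) =O[l] fun _ ↦ (1 : ℝ) :=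
    (div_isBoundedUnder_of_isBigO hD_lower).isBigO_one ℝ
  have hmain := (hratio.mul hD_sub).const_mul_left (-1 / 8)
  simp only [one_mul] at hmain
  have hidentity : (fun i ↦ normalizedA (δ i) (k i) (x i) - √(2 * k i) / 4) =ᶠ[l] fun i ↦
      -1 / 8 * (2 * √(2 * k i) / (1 - (1 - δ i) * x i ^ 4) *
        (1 - (1 - δ i) * x i ^ 4 - 2 * √(2 * k i))) - k i := by
    filter_upwards [hk_pos, eventually_normalizedA_denominator_ne_zero hk hδ hx] with i hi hD
    have hsq : √(2 * k i) ^ 2 = 2 * k i := Real.sq_sqrt (mul_nonneg zero_le_two (le_of_lt hi))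
    rw [normalizedA]
    generalize √(2 * k i) = w at hsq ⊢
    field_simp
    linear_combination (-16) * hsq
  exact hidentity.trans_isBigO (hmain.sub (isBigO_refl k l))

theorem normalizedA_isBigO_sqrt (hk : Tendsto k l (𝓝[>] 0)) (hδ : δ =O[l] k)
    (hx : ∀ᶠ i in l, IsNormalizedRoot (δ i) (k i) (x i)) :
    (fun i ↦ normalizedA (δ i) (k i) (x i)) =O[l] fun i ↦ √(2 * k i) := by
  have hk_sqrt := isLittleO_sqrt (hk.mono_right (nhdsWithin_mono 0 Ioi_subset_Ici_self))
  have hremainder := (normalizedA_sub_isBigO hk hδ hx).trans hk_sqrt.isBigO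
  refine (hremainder.add ((isBigO_refl _ l).const_mul_left 4⁻¹)).congr_left fun i ↦ ?_
  ring

theorem two_mul_div_sub_one_isBigO (hk : Tendsto k l (𝓝[>] 0)) (hδ : δ =O[l] k)
    (hx : ∀ᶠ i in l, IsNormalizedRoot (δ i) (k i) (x i)) :
    (fun i ↦ 2 * x i / (1 + x i ^ 2) - 1) =O[l] k := by
  obtain ⟨-, hk_pos⟩ := tendsto_nhdsWithin_iff.mp hk
  have hu := one_sub_sq_isBigO_sqrt hk hδ hx
  refine IsBigO.trans (IsBigO.of_bound' ?_)
    (mul_isBigO_of_isBigO_sqrt (hk_pos.mono fun _ hi ↦ le_of_lt hi) hu hu)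
  filter_upwards [hx] with i hi
  rw [← sq]
  exact hi.abs_two_mul_div_sub_one_le.trans (le_abs_self _)

theorem normalizedB_sub_isBigO (hk : Tendsto k l (𝓝[>] 0)) (hδ : δ =O[l] k)
    (hx : ∀ᶠ i in l, IsNormalizedRoot (δ i) (k i) (x i)) :
    (fun i ↦ normalizedB (δ i) (k i) (x i) - (1 - √(2 * k i) / 4)) =O[l] k := by
  obtain ⟨hk_zero, hk_pos⟩ := tendsto_nhdsWithin_iff.mp hk
  have hk_one : k =O[l] fun _ ↦ (1 : ℝ) := hk_zero.isBigO_one ℝ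
  have hx_sq : (fun i ↦ x i ^ 2) =O[l] fun _ ↦ (1 : ℝ) := by
    simpa only [one_pow] using (isBigO_one_of_isNormalizedRoot hx).pow 2
  have hfactor : (fun i ↦ 1 - δ i) =O[l] fun _ ↦ (1 : ℝ) :=
    (isBigO_refl _ l).sub (hδ.trans hk_one)
  have hgap : (fun i ↦ 1 - (1 - δ i) * x i ^ 2) =O[l] fun i ↦ √(2 * k i) := by
    have hk_sqrt := isLittleO_sqrt (hk.mono_right (nhdsWithin_mono 0 Ioi_subset_Ici_self))
    have hδx_sq := (hδ.trans hk_sqrt.isBigO).mul hx_sq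
    simp only [mul_one] at hδx_sq
    refine ((one_sub_sq_isBigO_sqrt hk hδ hx).add hδx_sq).congr_left fun i ↦ ?_
    ring
  have hratio := hfactor.mul (two_mul_div_sub_one_isBigO hk hδ hx)
  have hcross := mul_isBigO_of_isBigO_sqrt (hk_pos.mono fun _ hi ↦ le_of_lt hi) hgap
    (normalizedA_isBigO_sqrt hk hδ hx)
  have hlinear := (hfactor.mul hx_sq).mul (isBigO_refl k l)
  simp only [one_mul] at hratio hlinear
  -- With `z = 2x/(1 + x²)`, the coefficient `b` and the normalized `a` are related by
  -- `b = 1 - a + (1 - δ)(z - 1) - δ + (1 - (1 - δ)x²)a - (1 - δ)x²k`.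
  refine ((((hratio.sub hδ).sub (normalizedA_sub_isBigO hk hδ hx)).add hcross).sub
    hlinear).congr_left fun i ↦ ?_
  rw [normalizedB]
  ring

end Asymptotic

/-- A root `β ∈ (0, s]` of the monopoly quartic with period length `h`, where `s` stands for
`σ_K/σ_S`. -/
structure IsMonopolyRoot (s γ ρ h β : ℝ) : Prop where
  mem_Ioc : β ∈ Ioc 0 s
  quartic : 0 = (1 - ρ * h) * β ^ 4 - (2 - ρ * h + β * γ * h) * s ^ 2 * β ^ 2
    + s ^ 4 * (1 - β * γ * h)

/-- The price-impact parameter `λ` of a trading intensity `β`. -/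
noncomputable def priceImpact (σS σK β : ℝ) : ℝ :=
  β * σS ^ 2 / (σK ^ 2 + β ^ 2 * σS ^ 2)

/-- The inventory mean-reversion parameter `φ` of a trading intensity `β`. -/
noncomputable def meanReversion (σS σK β : ℝ) : ℝ :=
  1 - priceImpact σS σK β * β / (1 - priceImpact σS σK β * β)

/-- The value-function coefficient `A` with period length `h`, as a function of the mean
reversion `φ`. -/
noncomputable def coeffA (γ ρ h φ : ℝ) : ℝ :=
  (1 - ρ * h) * (1 - φ) ^ 2 * γ * h / (1 - (1 - ρ * h) * (1 - φ) ^ 2)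

/-- The value-function coefficient `B` with period length `h`, as a function of the trading
intensity `β`, the price impact `lam` and the coefficient `A`. -/
noncomputable def coeffB (γ ρ h β lam A : ℝ) : ℝ :=
  (1 - ρ * h) * β * (2 * (1 - lam * β) - β * (A + γ * h))

section Rescaling

variable {s γ ρ h β σS σK : ℝ}

theorem isMonopolyRoot_iff (hs : 0 < s) :
    IsMonopolyRoot s γ ρ h β ↔ IsNormalizedRoot (ρ * h) (s * γ * h) (β / s) := by
  obtain ⟨x, rfl⟩ : ∃ x, β = s * x := ⟨β / s, (mul_div_cancel₀ β hs.ne').symm⟩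
  rw [mul_div_cancel_left₀ x hs.ne']
  constructor
  · rintro ⟨⟨hβ_pos, hβ_le⟩, hquartic⟩
    refine ⟨pos_of_mul_pos_right hβ_pos hs.le, (mul_le_iff_le_one_right hs).mp hβ_le, ?_⟩
    apply mul_left_cancel₀ (pow_ne_zero 4 hs.ne')
    linear_combination -hquartic
  · rintro ⟨hx_pos, hx_le, heq⟩
    exact ⟨⟨mul_pos hs hx_pos, mul_le_of_le_one_right hs.le hx_le⟩,
      by linear_combination -s ^ 4 * heq⟩

theorem exists_isMonopolyRoot (ρ : ℝ) (hs : 0 < s) (hγ : 0 ≤ γ) (hh : 0 ≤ h) :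
    ∃ β, IsMonopolyRoot s γ ρ h β := by
  obtain ⟨x, hx⟩ := exists_isNormalizedRoot (ρ * h) (k := s * γ * h) (by positivity)
  refine ⟨s * x, (isMonopolyRoot_iff hs).mpr ?_⟩
  rwa [mul_div_cancel_left₀ x hs.ne']

theorem IsMonopolyRoot.unique {b : ℝ} (hs : 0 < s) (hγ : 0 < γ) (hh : 0 < h) (hρ : ρ * h ≤ 1)
    (hb : IsMonopolyRoot s γ ρ h b) (hβ : IsMonopolyRoot s γ ρ h β) : b = β :=
  (div_left_inj' hs.ne').mp <| ((isMonopolyRoot_iff hs).mp hb).unique hρ (by positivity)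
    ((isMonopolyRoot_iff hs).mp hβ)

theorem one_sub_priceImpact_mul (hK : σK ≠ 0) :
    1 - priceImpact σS σK β * β = 1 / (1 + (β / (σK / σS)) ^ 2) := by
  have : 0 < σK ^ 2 + β ^ 2 * σS ^ 2 := by positivity
  have : 0 < σK ^ 2 + (β * σS) ^ 2 := by positivity
  rw [priceImpact]
  field_simp
  ring

theorem one_sub_meanReversion (hK : σK ≠ 0) :
    1 - meanReversion σS σK β = (β / (σK / σS)) ^ 2 := by
  have : 0 < 1 + (β / (σK / σS)) ^ 2 := by positivity
  rw [meanReversion, sub_sub_cancel,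
    ← sub_sub_cancel 1 (priceImpact σS σK β * β), one_sub_priceImpact_mul hK, sub_sub_cancel]
  field_simp
  ring

theorem coeffA_meanReversion (hS : σS ≠ 0) (hK : σK ≠ 0) :
    coeffA γ ρ h (meanReversion σS σK β) =
      normalizedA (ρ * h) (σK / σS * γ * h) (β / (σK / σS)) / (σK / σS) := by
  rw [coeffA, normalizedA, one_sub_meanReversion hK]
  have hs : σK / σS ≠ 0 := div_ne_zero hK hS
  generalize σK / σS = s at hs ⊢
  field_simp

theorem coeffB_meanReversion (hS : σS ≠ 0) (hK : σK ≠ 0) :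
    coeffB γ ρ h β (priceImpact σS σK β) (coeffA γ ρ h (meanReversion σS σK β)) =
      σK / σS * normalizedB (ρ * h) (σK / σS * γ * h) (β / (σK / σS)) := by
  rw [coeffB, normalizedB, coeffA_meanReversion hS hK, one_sub_priceImpact_mul hK]
  field_simp

theorem sqrt_leading_term_div (hs : 0 ≤ s) (hγ : 0 ≤ γ) :
    √(2 * (s * γ * h)) / 4 / s = √2 / 4 * √γ * √s⁻¹ * √h := by
  rw [Real.sqrt_mul zero_le_two, Real.sqrt_mul (by positivity), Real.sqrt_mul hs,
    Real.sqrt_inv, ← Real.sqrt_div_self]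
  ring

theorem mul_sqrt_leading_term (hs : 0 ≤ s) (hγ : 0 ≤ γ) :
    s * (√(2 * (s * γ * h)) / 4) = √2 / 4 * √γ * s ^ ((3 : ℝ) / 2) * √h := by
  have hpow : s ^ ((3 : ℝ) / 2) = s * √s := by
    rw [Real.sqrt_eq_rpow, ← Real.rpow_one_add' hs (by norm_num)]
    norm_num
  rw [hpow, Real.sqrt_mul zero_le_two, Real.sqrt_mul (by positivity), Real.sqrt_mul hs]
  ring

end Rescaling

section SmallPeriod

variable {γ ρ σS σK : ℝ} {β : ℝ → ℝ}

theorem tendsto_const_mul_nhdsGT_zero {c : ℝ} (hc : 0 < c) :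
    Tendsto (fun h ↦ c * h) (𝓝[>] 0) (𝓝[>] 0) := by
  simpa only [mul_zero, id] using TendstoNhdsWithinIoi.const_mul hc (tendsto_id (x := 𝓝[>] (0 : ℝ)))

theorem const_mul_isBigO_const_mul (a : ℝ) {c : ℝ} (hc : c ≠ 0) (l : Filter ℝ) :
    (fun h ↦ a * h) =O[l] fun h ↦ c * h :=
  ((isBigO_refl _ l).const_mul_left a).const_mul_right hc

theorem eventually_coeffA_denominator_ne_zero (hS : 0 < σS) (hK : 0 < σK) (hγ : 0 < γ)
    (hβ : ∀ᶠ h in 𝓝[>] 0, IsMonopolyRoot (σK / σS) γ ρ h (β h)) :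
    ∀ᶠ h in 𝓝[>] 0, 1 - (1 - ρ * h) * (1 - meanReversion σS σK (β h)) ^ 2 ≠ 0 := by
  have hs : 0 < σK / σS := div_pos hK hS
  have hc : 0 < σK / σS * γ := mul_pos hs hγ
  filter_upwards [eventually_normalizedA_denominator_ne_zero (tendsto_const_mul_nhdsGT_zero hc)
    (const_mul_isBigO_const_mul ρ hc.ne' _) (hβ.mono fun h ↦ (isMonopolyRoot_iff hs).mp)] with h hD
  rwa [one_sub_meanReversion hK.ne', ← pow_mul]

theorem coeffA_sub_isBigO (hS : 0 < σS) (hK : 0 < σK) (hγ : 0 < γ)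
    (hβ : ∀ᶠ h in 𝓝[>] 0, IsMonopolyRoot (σK / σS) γ ρ h (β h)) :
    (fun h ↦ coeffA γ ρ h (meanReversion σS σK (β h)) - √2 / 4 * √γ * √(σS / σK) * √h)
      =O[𝓝[>] 0] fun h ↦ h := by
  have hs : 0 < σK / σS := div_pos hK hS
  have hc : 0 < σK / σS * γ := mul_pos hs hγ
  have hnormalized := normalizedA_sub_isBigO (tendsto_const_mul_nhdsGT_zero hc)
    (const_mul_isBigO_const_mul ρ hc.ne' _) (hβ.mono fun h ↦ (isMonopolyRoot_iff hs).mp)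
  refine ((hnormalized.const_mul_left (σK / σS)⁻¹).congr_left fun h ↦ ?_).trans
    (isBigO_const_mul_self _ _ _)
  rw [coeffA_meanReversion hS.ne' hK.ne', ← inv_div σK σS, ← sqrt_leading_term_div hs.le hγ.le]
  ring

theorem coeffB_sub_isBigO (hS : 0 < σS) (hK : 0 < σK) (hγ : 0 < γ)
    (hβ : ∀ᶠ h in 𝓝[>] 0, IsMonopolyRoot (σK / σS) γ ρ h (β h)) :
    (fun h ↦ coeffB γ ρ h (β h) (priceImpact σS σK (β h))
        (coeffA γ ρ h (meanReversion σS σK (β h)))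
      - (σK / σS - √2 / 4 * √γ * (σK / σS) ^ ((3 : ℝ) / 2) * √h)) =O[𝓝[>] 0] fun h ↦ h := by
  have hs : 0 < σK / σS := div_pos hK hS
  have hc : 0 < σK / σS * γ := mul_pos hs hγ
  have hnormalized := normalizedB_sub_isBigO (tendsto_const_mul_nhdsGT_zero hc)
    (const_mul_isBigO_const_mul ρ hc.ne' _) (hβ.mono fun h ↦ (isMonopolyRoot_iff hs).mp)
  refine ((hnormalized.const_mul_left (σK / σS)).congr_left fun h ↦ ?_).trans
    (isBigO_const_mul_self _ _ _)
  rw [coeffB_meanReversion hS.ne' hK.ne', ← mul_sqrt_leading_term hs.le hγ.le]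
  ring

theorem eventually_const_mul_le_one (ρ : ℝ) : ∀ᶠ h in 𝓝[>] 0, ρ * h ≤ 1 := by
  have hlim : Tendsto (fun h ↦ ρ * h) (𝓝[>] 0) (𝓝 0) := by
    refine tendsto_nhdsWithin_of_tendsto_nhds ?_
    simpa only [mul_zero] using (continuous_const_mul ρ).tendsto 0
  exact hlim.eventually_le_const one_pos

theorem exists_bound_of_eventually_of_isBigO {P : ℝ → Prop} {f g : ℝ → ℝ}
    (hP : ∀ᶠ h in 𝓝[>] 0, P h) (hf : f =O[𝓝[>] 0] fun h ↦ h) (hg : g =O[𝓝[>] 0] fun h ↦ h) :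
    ∃ ε > 0, ∃ C > 0, ∀ h, 0 < h → h < ε → P h ∧ |f h| ≤ C * h ∧ |g h| ≤ C * h := by
  obtain ⟨C, hC, hfg⟩ := (hf.prod_left hg).exists_pos
  obtain ⟨ε, hε, hsub⟩ := mem_nhdsGT_iff_exists_Ioo_subset.mp (hP.and hfg.bound)
  refine ⟨ε, hε, C, hC, fun h hh hhε ↦ ?_⟩
  obtain ⟨hPh, hbound⟩ := hsub ⟨hh, hhε⟩
  rw [Real.norm_of_nonneg hh.le] at hbound
  exact ⟨hPh, (norm_fst_le _).trans hbound, (norm_snd_le _).trans hbound⟩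

end SmallPeriod

theorem stmt4_general (σS σK γ ρ : ℝ) (hS : 0 < σS) (hK : 0 < σK) (hγ : 0 < γ) :
    ∃ ε > 0, ∃ C > 0, ∀ Δt : ℝ, 0 < Δt → Δt < ε →
      ∃ β lam φ A B : ℝ,
        (β ∈ Set.Ioc 0 (σK / σS) ∧
          0 = (1 - ρ * Δt) * β ^ 4
                - (2 - ρ * Δt + β * γ * Δt) * (σK / σS) ^ 2 * β ^ 2
                + (σK / σS) ^ 4 * (1 - β * γ * Δt)) ∧
        (∀ b : ℝ, b ∈ Set.Ioc 0 (σK / σS) →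
          0 = (1 - ρ * Δt) * b ^ 4
                - (2 - ρ * Δt + b * γ * Δt) * (σK / σS) ^ 2 * b ^ 2
                + (σK / σS) ^ 4 * (1 - b * γ * Δt) → b = β) ∧
        lam = β * σS ^ 2 / (σK ^ 2 + β ^ 2 * σS ^ 2) ∧
        φ = 1 - lam * β / (1 - lam * β) ∧
        1 - (1 - ρ * Δt) * (1 - φ) ^ 2 ≠ 0 ∧
        A = (1 - ρ * Δt) * (1 - φ) ^ 2 * γ * Δt / (1 - (1 - ρ * Δt) * (1 - φ) ^ 2) ∧
        B = (1 - ρ * Δt) * β * (2 * (1 - lam * β) - β * (A + γ * Δt)) ∧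
        |A - Real.sqrt 2 / 4 * Real.sqrt γ * Real.sqrt (σS / σK) * Real.sqrt Δt| ≤ C * Δt ∧
        |B - (σK / σS
              - Real.sqrt 2 / 4 * Real.sqrt γ * (σK / σS) ^ ((3 : ℝ) / 2) * Real.sqrt Δt)|
          ≤ C * Δt := by
  have hs : 0 < σK / σS := div_pos hK hS
  choose! β hβ using fun h (hh : 0 < h) ↦ exists_isMonopolyRoot ρ hs hγ.le hh.le
  have hβ_ev : ∀ᶠ h in 𝓝[>] 0, IsMonopolyRoot (σK / σS) γ ρ h (β h) :=
    eventually_mem_nhdsWithin.mono hβ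
  obtain ⟨ε, hε, C, hC, hsmall⟩ := exists_bound_of_eventually_of_isBigO
    ((eventually_const_mul_le_one ρ).and (eventually_coeffA_denominator_ne_zero hS hK hγ hβ_ev))
    (coeffA_sub_isBigO hS hK hγ hβ_ev) (coeffB_sub_isBigO hS hK hγ hβ_ev)
  refine ⟨ε, hε, C, hC, fun h hh hhε ↦ ?_⟩
  obtain ⟨⟨hρh, hdenominator⟩, hA, hB⟩ := hsmall h hh hhε
  exact ⟨β h, priceImpact σS σK (β h), meanReversion σS σK (β h), _, _,
    ⟨(hβ h hh).mem_Ioc, (hβ h hh).quartic⟩,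
    fun b hb_mem hb ↦ IsMonopolyRoot.unique hs hγ hh hρh ⟨hb_mem, hb⟩ (hβ h hh),
    rfl, rfl, hdenominator, rfl, rfl, hA, hB⟩

/-- for small `Δt > 0`, the value-function coefficients
`A = (1−ρΔt)(1−φ)²γΔt / (1 − (1−ρΔt)(1−φ)²)` and
`B = (1−ρΔt)β(2(1−λβ) − β(A+γΔt))` are well defined and satisfy
`A = (√2/4)γ^{1/2}(σ_S/σ_K)^{1/2}√Δt + O(Δt)` and
`B = σ_K/σ_S − (√2/4)γ^{1/2}(σ_K/σ_S)^{3/2}√Δt + O(Δt)`. -/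
theorem stmt4 (σS σK γ ρ : ℝ) (hσS : 0 < σS) (hσK : 0 < σK) (hγ : 0 < γ) (hρ : 0 < ρ) :
    ∃ ε > 0, ∃ C > 0, ∀ Δt : ℝ, 0 < Δt → Δt < ε →
      ∃ β lam φ A B : ℝ,
        (β ∈ Set.Ioc 0 (σK / σS) ∧
          0 = (1 - ρ * Δt) * β ^ 4
                - (2 - ρ * Δt + β * γ * Δt) * (σK / σS) ^ 2 * β ^ 2
                + (σK / σS) ^ 4 * (1 - β * γ * Δt)) ∧
        (∀ b : ℝ, b ∈ Set.Ioc 0 (σK / σS) →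
          0 = (1 - ρ * Δt) * b ^ 4
                - (2 - ρ * Δt + b * γ * Δt) * (σK / σS) ^ 2 * b ^ 2
                + (σK / σS) ^ 4 * (1 - b * γ * Δt) → b = β) ∧
        lam = β * σS ^ 2 / (σK ^ 2 + β ^ 2 * σS ^ 2) ∧
        φ = 1 - lam * β / (1 - lam * β) ∧
        1 - (1 - ρ * Δt) * (1 - φ) ^ 2 ≠ 0 ∧
        A = (1 - ρ * Δt) * (1 - φ) ^ 2 * γ * Δt / (1 - (1 - ρ * Δt) * (1 - φ) ^ 2) ∧
        B = (1 - ρ * Δt) * β * (2 * (1 - lam * β) - β * (A + γ * Δt)) ∧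
        |A - Real.sqrt 2 / 4 * Real.sqrt γ * Real.sqrt (σS / σK) * Real.sqrt Δt| ≤ C * Δt ∧
        |B - (σK / σS
              - Real.sqrt 2 / 4 * Real.sqrt γ * (σK / σS) ^ ((3 : ℝ) / 2) * Real.sqrt Δt)|
          ≤ C * Δt :=
  stmt4_general σS σK γ ρ hσS hσK hγ
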